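/- arXiv:1609.05890 — 3 statements merged into one kernel-verified Lean document; each statement's English description precedes it below -/
import Mathlib

section
/- For every integer n ≥ 2, the maximum dimension of a proper face of C_n equals n⁴ − 3n² + 1; that is, every nonempty face of C_n other than C_n itself has affine dimension at most n⁴ − 3n² + 1, and there exists a nonempty face of C_n, distinct from C_n, whose affine dimension equals n⁴ − 3n² + 1. -/
open Matrix
open scoped ComplexOrder

noncomputable section

/-- `Cset n` is the set of n²×n² complex positive semidefinite matrices, written in block
form with blocks indexed by pairs `(i,k)` (block row `i`, inner row `k`), whose `(i,j)`
blocks have trace `δ_{ij}`.  It corresponds to the set of quantum channels via the Choi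
matrix. -/
def Cset (n : ℕ) : Set (Matrix (Fin n × Fin n) (Fin n × Fin n) ℂ) :=
  {A | A.PosSemidef ∧
    ∀ i j : Fin n, ∑ k : Fin n, A (i, k) (j, k) = if i = j then 1 else 0}

/-- `F` is a face of the convex set `C`: a convex subset such that whenever a point of `F`
lies in the open segment between two points of `C`, both endpoints lie in `F`. -/
def IsFace {V : Type*} [AddCommGroup V] [Module ℝ V] (C F : Set V) : Prop :=
  F ⊆ C ∧ Convex ℝ F ∧
    ∀ x ∈ C, ∀ y ∈ C, ∀ t : ℝ, 0 < t → t < 1 → t • x + (1 - t) • y ∈ F → x ∈ F ∧ y ∈ F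

/-- The face of `C` generated by `A`: the smallest face of `C` containing `A`. -/
def faceGen {V : Type*} [AddCommGroup V] [Module ℝ V] (C : Set V) (A : V) : Set V :=
  ⋂₀ {F : Set V | IsFace C F ∧ A ∈ F}

/-- The dimension of a face: the dimension of its affine hull as a real affine subspace. -/
def faceDim {V : Type*} [AddCommGroup V] [Module ℝ V] (F : Set V) : ℕ :=
  Module.finrank ℝ ↥(vectorSpan ℝ F)

/-!
A point of a proper face of a spectrahedron `{A ≥ 0 | T A = b}` that has the smallest kernel must
be singular, since otherwise every segment of the spectrahedron ending there could be prolonged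
inside it. So all matrices of the face annihilate a common vector `v ≠ 0`, and the face spans only
directions `H` with `H` Hermitian, `H v = 0` and `T H = 0`. Conversely, all these directions occur
in the face `{A | A v = 0}` as soon as it contains a matrix whose kernel is exactly the line of `v`.

For `N × N` matrices, `H ↦ H v` maps the Hermitian matrices onto the real hyperplane of all `w`
with `v* w` real, so the Hermitian matrices annihilating `v` have dimension
`N² - (2 N - 1) = (N - 1)²`. Channels from `m × m` to `k × k` matrices correspond to `N = m k` and
`T` the partial trace, which maps these matrices onto all Hermitian `m × m` matrices: for each `y`
there is `z ≠ 0` with `y ⊗ z` orthogonal to `v`, and `y y* ⊗ z z*` is sent to a multiple of `y y*`.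
This gives `(m k - 1)² - m²`, attained at a standard basis vector `v`.
-/

section LinearAlgebra

lemma finrank_map_add_finrank_inf_ker {K V W : Type*} [DivisionRing K] [AddCommGroup V]
    [Module K V] [AddCommGroup W] [Module K W] (p : Submodule K V) [FiniteDimensional K p]
    (f : V →ₗ[K] W) :
    Module.finrank K (p.map f) + Module.finrank K ↥(p ⊓ f.ker) = Module.finrank K p := by
  rw [← (f.domRestrict p).finrank_range_add_finrank_ker, LinearMap.range_domRestrict,
    LinearMap.ker_domRestrict, ← Submodule.map_comap_subtype, Submodule.finrank_map_subtype_eq]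

lemma finrank_selfAdjoint_submodule (A : Type*) [AddCommGroup A] [Module ℂ A] [StarAddMonoid A]
    [StarModule ℂ A] [FiniteDimensional ℂ A] :
    Module.finrank ℝ (selfAdjoint.submodule ℝ A) = Module.finrank ℂ A := by
  have : FiniteDimensional ℝ A := .trans ℝ ℂ A
  have h := (imaginaryPart (A := A)).finrank_range_add_finrank_ker
  rw [LinearMap.range_eq_top.2 imaginaryPart_surjective, finrank_top, ker_imaginaryPart,
    finrank_real_of_complex] at h
  change Module.finrank ℝ (selfAdjoint.submodule ℝ A) + _ = _ at h
  lia

lemma exists_mul_mul_self_eq_self {K m n : Type*} [Field K] [Fintype m] [Fintype n]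
    (M : Matrix m n K) : ∃ G : Matrix n m K, M * G * M = M := by
  classical
  obtain ⟨s, hs⟩ := (toLin' M).rangeRestrict.exists_rightInverse_of_surjective
    (LinearMap.range_rangeRestrict _)
  obtain ⟨g, hg⟩ := LinearMap.exists_extend s
  refine ⟨LinearMap.toMatrix' g, (toLin').injective (LinearMap.ext fun x => ?_)⟩
  have hgx : g (M *ᵥ x) = s ((toLin' M).rangeRestrict x) :=
    LinearMap.congr_fun hg ((toLin' M).rangeRestrict x)
  have hsx := congrArg Subtype.val (LinearMap.congr_fun hs ((toLin' M).rangeRestrict x))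
  simpa [hgx] using hsx

lemma exists_ne_zero_star_dotProduct_eq_zero {k R : Type*} [Fintype k] [Nontrivial k] [Field R]
    [StarRing R] (a : k → R) : ∃ z : k → R, z ≠ 0 ∧ star z ⬝ᵥ a = 0 := by
  have hker : (dotProductBilin R R a).ker ≠ ⊥ :=
    LinearMap.ker_ne_bot_of_finrank_lt (by simpa using Fintype.one_lt_card (α := k))
  obtain ⟨z, hz, hz0⟩ := (Submodule.ne_bot_iff _).1 hker
  refine ⟨star z, star_ne_zero.2 hz0, ?_⟩
  rw [star_star, dotProduct_comm]
  exact hz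

lemma ker_mulVecLin_diagonal_le_span_single {K ι : Type*} [Field K] [Fintype ι] [DecidableEq ι]
    {d : ι → K} {i₀ : ι} (hd : ∀ i, d i = 0 → i = i₀) :
    (diagonal d).mulVecLin.ker ≤ Submodule.span K {Pi.single i₀ 1} := by
  intro x hx
  refine Submodule.mem_span_singleton.2 ⟨x i₀, ?_⟩
  ext i
  obtain rfl | hi := eq_or_ne i i₀
  · simp
  · have : d i * x i = 0 := by simpa [mulVec_diagonal] using congrFun (LinearMap.mem_ker.1 hx) i
    simp [hi, (mul_eq_zero.1 this).resolve_left (mt (hd i) hi)]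

end LinearAlgebra

section PosSemidef

variable {𝕜 ι : Type*} [RCLike 𝕜]

open scoped MatrixOrder in
lemma exists_pos_posSemidef_one_add_smul [Finite ι] [DecidableEq ι] {H : Matrix ι ι 𝕜}
    (hH : H.IsHermitian) : ∃ ε : ℝ, 0 < ε ∧ (1 + ε • H).PosSemidef := by
  have := Fintype.ofFinite ι
  obtain ⟨c, hc⟩ := (Matrix.finite_real_spectrum (A := H)).bddBelow
  set d : ℝ := |c| + 1
  have hd : 0 < d := by positivity
  have hle : algebraMap ℝ (Matrix ι ι 𝕜) (-d) ≤ H :=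
    (algebraMap_le_iff_le_spectrum hH).2 fun x hx => by
      have := hc hx
      have := neg_abs_le c
      simp only [d]; linarith
  refine ⟨d⁻¹, inv_pos.2 hd, ?_⟩
  have hsplit : 1 + d⁻¹ • H = d⁻¹ • (H - algebraMap ℝ (Matrix ι ι 𝕜) (-d)) := by
    rw [Algebra.algebraMap_eq_smul_one, smul_sub, smul_smul]
    simp [hd.ne', add_comm]
  rw [hsplit]
  exact (Matrix.le_iff.1 hle).smul (inv_nonneg.2 hd.le)

lemma span_range_vecMulVec_star_self [Finite ι] :
    Submodule.span ℝ (Set.range fun y : ι → 𝕜 => vecMulVec y (star y)) =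
      selfAdjoint.submodule ℝ (Matrix ι ι 𝕜) := by
  classical
  refine le_antisymm (Submodule.span_le.2 ?_) fun H hH => ?_
  · have := Fintype.ofFinite ι
    rintro _ ⟨y, rfl⟩
    exact (posSemidef_vecMulVec_self_star y).isHermitian
  have mem_of_posSemidef {A : Matrix ι ι 𝕜} (hA : A.PosSemidef) :
      A ∈ Submodule.span ℝ (Set.range fun y : ι → 𝕜 => vecMulVec y (star y)) := by
    obtain ⟨r, y, rfl⟩ := posSemidef_iff_eq_sum_vecMulVec.1 hA
    exact Submodule.sum_mem _ fun i _ => Submodule.subset_span ⟨y i, rfl⟩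
  obtain ⟨ε, hε, hpos⟩ := exists_pos_posSemidef_one_add_smul (H := H) hH
  rw [← Submodule.smul_mem_iff _ hε.ne', ← add_sub_cancel_left 1 (ε • H)]
  exact Submodule.sub_mem _ (mem_of_posSemidef hpos) (mem_of_posSemidef PosSemidef.one)

variable [Fintype ι]

open scoped MatrixOrder in
/- Writing `A = Mᴴ M`, the kernel condition gives `H = Mᴴ Z M`, so that
`A + ε H = Mᴴ (1 + ε Z) M`. -/
lemma exists_pos_posSemidef_add_smul_of_ker_le {A H : Matrix ι ι 𝕜} (hA : A.PosSemidef)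
    (hH : H.IsHermitian) (hker : A.mulVecLin.ker ≤ H.mulVecLin.ker) :
    ∃ ε : ℝ, 0 < ε ∧ (A + ε • H).PosSemidef := by
  classical
  obtain ⟨M, rfl⟩ : ∃ M : Matrix ι ι 𝕜, A = Mᴴ * M :=
    CStarAlgebra.nonneg_iff_eq_star_mul_self.1 hA.nonneg
  obtain ⟨G, hG⟩ := exists_mul_mul_self_eq_self M
  have hHGM : H * (G * M) = H := by
    rw [← sub_eq_zero, ← mul_sub_one]
    refine ext_of_mulVec_single fun j => ?_
    rw [← mulVec_mulVec, zero_mulVec]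
    apply hker
    rw [LinearMap.mem_ker, mulVecLin_apply, conjTranspose_mul_self_mulVec_eq_zero, mulVec_mulVec,
      mul_sub_one, ← mul_assoc, hG, sub_self, zero_mulVec]
  have hGMH : Mᴴ * Gᴴ * H = H := by
    simpa [conjTranspose_mul, hH.eq, mul_assoc] using congrArg conjTranspose hHGM
  obtain ⟨ε, hε, hpos⟩ := exists_pos_posSemidef_one_add_smul
    (isHermitian_conjTranspose_mul_mul G hH)
  refine ⟨ε, hε, ?_⟩
  have hfactor : Mᴴ * M + ε • H = Mᴴ * (1 + ε • (Gᴴ * H * G)) * M := by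
    have : Mᴴ * (Gᴴ * H * G) * M = H := by
      simp only [← mul_assoc] at hGMH hHGM ⊢
      rw [hGMH, hHGM]
    simp only [mul_add, add_mul, mul_one, mul_smul_comm, smul_mul_assoc, this]
  rw [hfactor]
  exact hpos.conjTranspose_mul_mul_same M

lemma ker_mulVecLin_add_of_posSemidef {A B : Matrix ι ι 𝕜} (hA : A.PosSemidef)
    (hB : B.PosSemidef) :
    (A + B).mulVecLin.ker = A.mulVecLin.ker ⊓ B.mulVecLin.ker := by
  ext x
  simp only [Submodule.mem_inf, LinearMap.mem_ker, mulVecLin_apply]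
  rw [← (hA.add hB).dotProduct_mulVec_zero_iff, ← hA.dotProduct_mulVec_zero_iff,
    ← hB.dotProduct_mulVec_zero_iff, add_mulVec, dotProduct_add]
  exact add_eq_zero_iff_of_nonneg (hA.dotProduct_mulVec_nonneg x) (hB.dotProduct_mulVec_nonneg x)

lemma ker_mulVecLin_smul {c : ℝ} (hc : c ≠ 0) (A : Matrix ι ι 𝕜) :
    (c • A).mulVecLin.ker = A.mulVecLin.ker := by
  ext x
  simp [hc]

lemma ker_mulVecLin_smul_add_smul {A B : Matrix ι ι 𝕜} (hA : A.PosSemidef)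
    (hB : B.PosSemidef) {s t : ℝ} (hs : 0 < s) (ht : 0 < t) :
    (s • A + t • B).mulVecLin.ker = A.mulVecLin.ker ⊓ B.mulVecLin.ker := by
  rw [ker_mulVecLin_add_of_posSemidef (hA.smul hs.le) (hB.smul ht.le),
    ker_mulVecLin_smul hs.ne', ker_mulVecLin_smul ht.ne']

lemma exists_forall_ker_mulVecLin_le {F : Set (Matrix ι ι 𝕜)} (hF : Convex ℝ F)
    (hne : F.Nonempty) (hpos : ∀ A ∈ F, A.PosSemidef) :
    ∃ A ∈ F, ∀ B ∈ F, A.mulVecLin.ker ≤ B.mulVecLin.ker := by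
  obtain ⟨A, hA, hmin⟩ := exists_minimalFor_of_wellFoundedLT (· ∈ F) (·.mulVecLin.ker) hne
  refine ⟨A, hA, fun B hB => ?_⟩
  have hmid : (1 / 2 : ℝ) • A + (1 / 2 : ℝ) • B ∈ F :=
    hF hA hB (by norm_num) (by norm_num) (by norm_num)
  have hker := ker_mulVecLin_smul_add_smul (hpos A hA) (hpos B hB)
    (one_half_pos (α := ℝ)) one_half_pos
  have hle := hmin hmid (hker.trans_le inf_le_left)
  exact hle.trans (hker.trans_le inf_le_right)

end PosSemidef

section Spectrahedron

variable {𝕜 ι W : Type*} [RCLike 𝕜] [AddCommGroup W] [Module ℝ W]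

/-- The positive semidefinite matrices satisfying the system `T A = b` of real affine equations. -/
def spectrahedron (T : Matrix ι ι 𝕜 →ₗ[ℝ] W) (b : W) : Set (Matrix ι ι 𝕜) :=
  {A | A.PosSemidef ∧ T A = b}

variable {T : Matrix ι ι 𝕜 →ₗ[ℝ] W} {b : W}

lemma convex_spectrahedron : Convex ℝ (spectrahedron T b) := by
  rintro A ⟨hA, hTA⟩ B ⟨hB, hTB⟩ s t hs ht hst
  refine ⟨(hA.smul hs).add (hB.smul ht), ?_⟩
  rw [map_add, map_smul, map_smul, hTA, hTB, Convex.combo_self hst]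

variable [Fintype ι]

lemma exists_pos_add_smul_mem_spectrahedron {A H : Matrix ι ι 𝕜} (hA : A ∈ spectrahedron T b)
    (hH : H.IsHermitian) (hTH : T H = 0) (hker : A.mulVecLin.ker ≤ H.mulVecLin.ker) :
    ∃ ε : ℝ, 0 < ε ∧ A + ε • H ∈ spectrahedron T b := by
  obtain ⟨ε, hε, hpos⟩ := exists_pos_posSemidef_add_smul_of_ker_le hA.1 hH hker
  exact ⟨ε, hε, hpos, by rw [map_add, map_smul, hTH, smul_zero, add_zero, hA.2]⟩

-- The kernel condition lets the segment from `C` to `A` be prolonged beyond `A`.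
lemma IsFace.mem_of_ker_mulVecLin_le {F : Set (Matrix ι ι 𝕜)} (hF : IsFace (spectrahedron T b) F)
    {A C : Matrix ι ι 𝕜} (hA : A ∈ F) (hC : C ∈ spectrahedron T b)
    (hker : A.mulVecLin.ker ≤ C.mulVecLin.ker) : C ∈ F := by
  obtain ⟨hFsub, -, hseg⟩ := hF
  have hAS := hFsub hA
  have hkerAC : A.mulVecLin.ker ≤ (A - C).mulVecLin.ker := fun x hx => by
    have hAx : A *ᵥ x = 0 := hx
    have hCx : C *ᵥ x = 0 := hker hx
    rw [LinearMap.mem_ker, mulVecLin_apply, sub_mulVec, hAx, hCx, sub_zero]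
  obtain ⟨ε, hε, hmem⟩ := exists_pos_add_smul_mem_spectrahedron hAS
    (hAS.1.isHermitian.sub hC.1.isHermitian) (by rw [map_sub, hAS.2, hC.2, sub_self]) hkerAC
  have hcombo : (1 / (1 + ε)) • (A + ε • (A - C)) + (1 - 1 / (1 + ε)) • C = A := by
    match_scalars <;> field_simp
    ring
  exact (hseg _ hmem C hC (1 / (1 + ε)) (by positivity) (by rw [div_lt_one] <;> linarith)
    (hcombo.symm ▸ hA)).2

lemma IsFace.exists_ne_zero_forall_mulVec_eq_zero {F : Set (Matrix ι ι 𝕜)}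
    (hF : IsFace (spectrahedron T b) F) (hne : F.Nonempty) (hproper : F ≠ spectrahedron T b) :
    ∃ v : ι → 𝕜, v ≠ 0 ∧ ∀ A ∈ F, A *ᵥ v = 0 := by
  obtain ⟨A, hA, hmin⟩ := exists_forall_ker_mulVecLin_le hF.2.1 hne fun B hB => (hF.1 hB).1
  have hker : A.mulVecLin.ker ≠ ⊥ := fun hbot => hproper <| hF.1.antisymm fun C hC =>
    hF.mem_of_ker_mulVecLin_le hA hC (hbot.trans_le bot_le)
  obtain ⟨v, hv, hv0⟩ := (Submodule.ne_bot_iff _).1 hker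
  exact ⟨v, hv0, fun B hB => hmin B hB hv⟩

/-- The real vector space of Hermitian matrices that annihilate the vector `v`. -/
def hermitianAnnihilator (v : ι → 𝕜) : Submodule ℝ (Matrix ι ι 𝕜) :=
  selfAdjoint.submodule ℝ (Matrix ι ι 𝕜) ⊓ ((mulVecBilin ℝ ℝ).flip v).ker

lemma mem_hermitianAnnihilator {v : ι → 𝕜} {H : Matrix ι ι 𝕜} :
    H ∈ hermitianAnnihilator v ↔ H.IsHermitian ∧ H *ᵥ v = 0 :=
  Iff.rfl

lemma vectorSpan_le_hermitianAnnihilator_inf_ker {F : Set (Matrix ι ι 𝕜)} {v : ι → 𝕜}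
    (hF : F ⊆ spectrahedron T b) (hv : ∀ A ∈ F, A *ᵥ v = 0) :
    vectorSpan ℝ F ≤ hermitianAnnihilator v ⊓ T.ker := by
  rw [vectorSpan_def, Submodule.span_le]
  rintro _ ⟨A, hA, B, hB, rfl⟩
  refine ⟨⟨(hF hA).1.isHermitian.sub (hF hB).1.isHermitian, ?_⟩, ?_⟩
  · simp [hv A hA, hv B hB]
  · simp [(hF hA).2, (hF hB).2]

/-- The face of a spectrahedron exposed by the functional `A ↦ v* A v`; by positivity this
functional vanishes exactly when `A v = 0`. -/
def kernelFace (T : Matrix ι ι 𝕜 →ₗ[ℝ] W) (b : W) (v : ι → 𝕜) : Set (Matrix ι ι 𝕜) :=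
  {A ∈ spectrahedron T b | A *ᵥ v = 0}

lemma isFace_kernelFace (v : ι → 𝕜) : IsFace (spectrahedron T b) (kernelFace T b v) := by
  refine ⟨fun A hA => hA.1, ?_, fun A hA B hB t ht0 ht1 hmem => ?_⟩
  · exact convex_spectrahedron.inter ((mulVecBilin ℝ ℝ).flip v).ker.convex
  · have hker : v ∈ A.mulVecLin.ker ⊓ B.mulVecLin.ker := by
      rw [← ker_mulVecLin_smul_add_smul hA.1 hB.1 ht0 (sub_pos.2 ht1)]
      exact hmem.2
    exact ⟨⟨hA, hker.1⟩, ⟨hB, hker.2⟩⟩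

lemma vectorSpan_kernelFace {A : Matrix ι ι 𝕜} {v : ι → 𝕜} (hA : A ∈ kernelFace T b v)
    (hker : A.mulVecLin.ker ≤ Submodule.span 𝕜 {v}) :
    vectorSpan ℝ (kernelFace T b v) = hermitianAnnihilator v ⊓ T.ker := by
  refine le_antisymm
    (vectorSpan_le_hermitianAnnihilator_inf_ker (fun B hB => hB.1) fun B hB => hB.2) ?_
  rintro H ⟨hHmem, hTH⟩
  obtain ⟨hH, hHv⟩ := mem_hermitianAnnihilator.1 hHmem
  have hkerH : A.mulVecLin.ker ≤ H.mulVecLin.ker :=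
    hker.trans ((Submodule.span_singleton_le_iff_mem _ _).2 hHv)
  obtain ⟨ε, hε, hmem⟩ := exists_pos_add_smul_mem_spectrahedron hA.1 hH hTH hkerH
  have hface : A + ε • H ∈ kernelFace T b v :=
    ⟨hmem, by rw [add_mulVec, smul_mulVec, hA.2, hHv, smul_zero, add_zero]⟩
  rw [← Submodule.smul_mem_iff _ hε.ne', ← add_sub_cancel_left A (ε • H)]
  exact vsub_mem_vectorSpan ℝ hface hA

end Spectrahedron

section AnnihilatorDimension

variable {ι : Type*} [Fintype ι] {v w : ι → ℂ}

lemma exists_ofReal_eq_star_dotProduct_self (hv : v ≠ 0) :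
    ∃ r : ℝ, r ≠ 0 ∧ star v ⬝ᵥ v = r := by
  obtain ⟨r, hr, hrv⟩ := RCLike.pos_iff_exists_ofReal.1 (dotProduct_star_self_pos_iff.2 hv)
  exact ⟨r, hr.ne', hrv.symm⟩

lemma exists_isHermitian_mulVec_eq (hv : v ≠ 0) (him : (star v ⬝ᵥ w).im = 0) :
    ∃ H : Matrix ι ι ℂ, H.IsHermitian ∧ H *ᵥ v = w := by
  obtain ⟨r, hr, hvv⟩ := exists_ofReal_eq_star_dotProduct_self hv
  obtain ⟨s, hvw⟩ : ∃ s : ℝ, star v ⬝ᵥ w = s := ⟨_, Complex.ext rfl him⟩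
  have hwv : star w ⬝ᵥ v = s := by
    rw [star_dotProduct, hvw]
    simp
  have hherm : (vecMulVec w (star v) + vecMulVec v (star w)).IsHermitian := by
    simp [IsHermitian, conjTranspose_vecMulVec, add_comm]
  refine ⟨r⁻¹ • (vecMulVec w (star v) + vecMulVec v (star w)) - (s / r ^ 2) • vecMulVec v (star v),
    ?_, ?_⟩
  · exact (hherm.smul (.all _)).sub
      ((posSemidef_vecMulVec_self_star v).isHermitian.smul (.all _))
  · simp only [sub_mulVec, smul_mulVec, add_mulVec, vecMulVec_mulVec, hvv, hwv, op_smul_eq_smul,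
      Complex.coe_smul]
    match_scalars <;> field_simp
    ring

lemma map_mulVec_selfAdjoint_eq_ker_im (hv : v ≠ 0) :
    (selfAdjoint.submodule ℝ (Matrix ι ι ℂ)).map ((mulVecBilin ℝ ℝ).flip v) =
      (Complex.imLm ∘ₗ dotProductBilin ℝ ℝ (star v)).ker := by
  ext w
  constructor
  · rintro ⟨H, hH, rfl⟩
    exact IsHermitian.im_star_dotProduct_mulVec_self hH v
  · exact exists_isHermitian_mulVec_eq hv

lemma finrank_ker_im_star_dotProduct_add_one (hv : v ≠ 0) :
    Module.finrank ℝ (Complex.imLm ∘ₗ dotProductBilin ℝ ℝ (star v)).ker + 1 =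
      2 * Fintype.card ι := by
  have hne : Complex.imLm ∘ₗ dotProductBilin ℝ ℝ (star v) ≠ 0 := fun h => by
    obtain ⟨r, hr, hvv⟩ := exists_ofReal_eq_star_dotProduct_self hv
    exact hr (by simpa [hvv] using LinearMap.congr_fun h (Complex.I • v))
  rw [Module.Dual.finrank_ker_add_one_of_ne_zero hne, finrank_real_of_complex,
    Module.finrank_fintype_fun_eq_card]

lemma finrank_hermitianAnnihilator (hv : v ≠ 0) :
    Module.finrank ℝ (hermitianAnnihilator v) = (Fintype.card ι - 1) ^ 2 := by
  have hrange := finrank_ker_im_star_dotProduct_add_one hv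
  have hrank := finrank_map_add_finrank_inf_ker (selfAdjoint.submodule ℝ (Matrix ι ι ℂ))
    ((mulVecBilin ℝ ℝ).flip v)
  rw [map_mulVec_selfAdjoint_eq_ker_im hv, finrank_selfAdjoint_submodule,
    Module.finrank_matrix, Module.finrank_self, mul_one] at hrank
  obtain ⟨N, hN⟩ := Nat.exists_eq_add_one.2 (show 0 < Fintype.card ι by lia)
  rw [hN] at hrange hrank ⊢
  change _ + Module.finrank ℝ (hermitianAnnihilator v) = _ at hrank
  rw [Nat.add_sub_cancel]
  linarith

end AnnihilatorDimension

section PartialTrace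

variable {m k : Type*} [Fintype k]

/-- The partial trace over the second tensor factor: blocks are indexed by `m`, and each `k × k`
block is replaced by its trace. It is linear over any ring `R` acting on the scalars, so that it
can be taken as a real linear map on complex matrices. -/
def partialTrace (R : Type*) {α : Type*} [Semiring R] [AddCommMonoid α] [Module R α] :
    Matrix (m × k) (m × k) α →ₗ[R] Matrix m m α where
  toFun A := of fun i j => ∑ l, A (i, l) (j, l)
  map_add' A B := by ext; simp [Finset.sum_add_distrib]
  map_smul' c A := by ext; simp [Finset.smul_sum]

@[simp]
lemma partialTrace_apply {R α : Type*} [Semiring R] [AddCommMonoid α] [Module R α]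
    (A : Matrix (m × k) (m × k) α) (i j : m) :
    partialTrace R A i j = ∑ l, A (i, l) (j, l) :=
  rfl

open scoped Kronecker in
lemma partialTrace_kronecker {R α : Type*} [Semiring R] [CommSemiring α] [Module R α]
    (A : Matrix m m α) (B : Matrix k k α) : partialTrace R (A ⊗ₖ B) = B.trace • A := by
  ext i j
  simp [trace, ← Finset.mul_sum, mul_comm]

lemma isHermitian_partialTrace {R α : Type*} [Semiring R] [AddCommMonoid α] [StarAddMonoid α]
    [Module R α] {A : Matrix (m × k) (m × k) α} (hA : A.IsHermitian) :
    (partialTrace R A).IsHermitian := by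
  ext i j
  simp [star_sum, hA.apply]

variable [Fintype m]

open scoped Kronecker in
lemma kronecker_vecMulVec_mulVec_vec {R : Type*} [CommRing R] [StarRing R] {y : m → R} {z : k → R}
    {X : Matrix k m R} (h : star z ⬝ᵥ (X *ᵥ star y) = 0) :
    (vecMulVec y (star y) ⊗ₖ vecMulVec z (star z)) *ᵥ vec X = 0 := by
  rw [kronecker_mulVec_vec, transpose_vecMulVec, Matrix.mul_assoc, mul_vecMulVec,
    vecMulVec_mul_vecMulVec, h, zero_smul]
  ext
  simp [vecMulVec_apply]

-- Rank-one matrices `y y*` span, and `y y* ⊗ z z*` annihilates `v` once `y ⊗ z` is orthogonal to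
-- `v`: a single linear condition on `z`.
open scoped Kronecker in
lemma map_partialTrace_hermitianAnnihilator [Nontrivial k] (v : m × k → ℂ) :
    (hermitianAnnihilator v).map (partialTrace ℝ) = selfAdjoint.submodule ℝ (Matrix m m ℂ) := by
  apply le_antisymm
  · rintro _ ⟨H, hH, rfl⟩
    exact isHermitian_partialTrace hH.1
  rw [← span_range_vecMulVec_star_self, Submodule.span_le]
  rintro _ ⟨y, rfl⟩
  obtain ⟨X, rfl⟩ := (vec_bijective (m := k) (n := m) (R := ℂ)).surjective v
  obtain ⟨z, hz, hzX⟩ := exists_ne_zero_star_dotProduct_eq_zero (X *ᵥ star y)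
  obtain ⟨r, hr, hrz⟩ := exists_ofReal_eq_star_dotProduct_self hz
  have hmem : vecMulVec y (star y) ⊗ₖ vecMulVec z (star z) ∈ hermitianAnnihilator (vec X) :=
    ⟨((posSemidef_vecMulVec_self_star y).kronecker (posSemidef_vecMulVec_self_star z)).isHermitian,
      kronecker_vecMulVec_mulVec_vec hzX⟩
  have htrace : partialTrace ℝ (vecMulVec y (star y) ⊗ₖ vecMulVec z (star z)) =
      r • vecMulVec y (star y) := by
    rw [partialTrace_kronecker, trace_vecMulVec, dotProduct_comm, hrz, Complex.coe_smul]
  rw [SetLike.mem_coe, ← Submodule.smul_mem_iff _ hr, ← htrace]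
  exact Submodule.mem_map_of_mem hmem

lemma finrank_hermitianAnnihilator_inf_ker_partialTrace [Nontrivial k] {v : m × k → ℂ}
    (hv : v ≠ 0) :
    Module.finrank ℝ ↥(hermitianAnnihilator v ⊓ (partialTrace (k := k) (α := ℂ) ℝ).ker) =
      (Fintype.card m * Fintype.card k - 1) ^ 2 - Fintype.card m ^ 2 := by
  have hrank := finrank_map_add_finrank_inf_ker (hermitianAnnihilator v) (partialTrace ℝ)
  rw [map_partialTrace_hermitianAnnihilator, finrank_hermitianAnnihilator hv,
    finrank_selfAdjoint_submodule, Module.finrank_matrix, Module.finrank_self, mul_one,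
    Fintype.card_prod, ← sq] at hrank
  exact Nat.eq_sub_of_add_eq' hrank

end PartialTrace

section ChannelSet

variable {m k : Type*} [Fintype k]

lemma exists_stochastic_eq_zero_iff [Nontrivial k] (p₀ : m × k) :
    ∃ d : m × k → ℝ, (∀ p, 0 ≤ d p) ∧ (∀ i, ∑ l, d (i, l) = 1) ∧ ∀ p, d p = 0 ↔ p = p₀ := by
  classical
  set w : m × k → ℝ := fun p => if p = p₀ then 0 else 1
  have hw0 (p : m × k) : 0 ≤ w p := by simp only [w]; positivity
  have hwpos (i : m) : 0 < ∑ l, w (i, l) := by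
    obtain ⟨l, hl⟩ := exists_ne p₀.2
    refine Finset.sum_pos' (fun l _ => hw0 _) ⟨l, Finset.mem_univ l, ?_⟩
    have : (i, l) ≠ p₀ := fun h => hl (congrArg Prod.snd h)
    simp [w, this]
  refine ⟨fun p => w p / ∑ l, w (p.1, l), fun p => div_nonneg (hw0 p) (hwpos _).le, fun i => ?_,
    fun p => ?_⟩
  · change ∑ l, w (i, l) / ∑ l, w (i, l) = 1
    rw [← Finset.sum_div, div_self (hwpos i).ne']
  · rw [div_eq_zero_iff, or_iff_left (hwpos p.1).ne']
    simp [w]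

variable [DecidableEq m]

variable (m k) in
/-- The Choi matrices of the quantum channels from `m × m` to `k × k` complex matrices. -/
def channelSet : Set (Matrix (m × k) (m × k) ℂ) :=
  spectrahedron (partialTrace ℝ) 1

lemma Cset_eq_channelSet (n : ℕ) : Cset n = channelSet (Fin n) (Fin n) := by
  ext A
  simp [Cset, channelSet, spectrahedron, ← Matrix.ext_iff, one_apply]

lemma diagonal_mem_channelSet [DecidableEq k] {d : m × k → ℝ} (hd : ∀ p, 0 ≤ d p)
    (hsum : ∀ i, ∑ l, d (i, l) = 1) : diagonal (fun p => (d p : ℂ)) ∈ channelSet m k := by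
  refine ⟨.diagonal fun p => Complex.zero_le_real.2 (hd p), ?_⟩
  ext i j
  obtain rfl | hij := eq_or_ne i j
  · simpa using mod_cast hsum i
  · simp [hij]

variable [Fintype m] [DecidableEq k]

lemma kernelFace_single_ne_channelSet (p₀ : m × k) :
    kernelFace (partialTrace ℝ) 1 (Pi.single p₀ 1) ≠ channelSet m k := by
  intro heq
  have hmem : diagonal (fun p : m × k => ((if p.2 = p₀.2 then 1 else 0 : ℝ) : ℂ)) ∈
      channelSet m k := diagonal_mem_channelSet (by intro p; positivity) (by simp)
  have hker := (heq.symm ▸ hmem).2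
  simpa using congrFun hker p₀

lemma exists_mem_kernelFace_ker_le_span_single [Nontrivial k] (p₀ : m × k) :
    ∃ A ∈ kernelFace (partialTrace ℝ) 1 (Pi.single p₀ (1 : ℂ)),
      A.mulVecLin.ker ≤ Submodule.span ℂ {Pi.single p₀ 1} := by
  obtain ⟨d, hd, hsum, hd0⟩ := exists_stochastic_eq_zero_iff p₀
  refine ⟨_, ⟨diagonal_mem_channelSet hd hsum, ?_⟩,
    ker_mulVecLin_diagonal_le_span_single fun p hp => (hd0 p).1 (mod_cast hp)⟩
  simp [(hd0 p₀).2 rfl]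

end ChannelSet

theorem max_dim_proper_face_general (m k : Type*) [Fintype m] [DecidableEq m] [Nonempty m]
    [Fintype k] [Nontrivial k] :
    (∀ F : Set (Matrix (m × k) (m × k) ℂ),
        IsFace (channelSet m k) F → F.Nonempty → F ≠ channelSet m k →
        faceDim F ≤ (Fintype.card m * Fintype.card k - 1) ^ 2 - Fintype.card m ^ 2) ∧
    ∃ F : Set (Matrix (m × k) (m × k) ℂ),
        IsFace (channelSet m k) F ∧ F.Nonempty ∧ F ≠ channelSet m k ∧
        faceDim F = (Fintype.card m * Fintype.card k - 1) ^ 2 - Fintype.card m ^ 2 := by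
  classical
  constructor
  · intro F hF hne hproper
    obtain ⟨v, hv, hFv⟩ := hF.exists_ne_zero_forall_mulVec_eq_zero hne hproper
    rw [← finrank_hermitianAnnihilator_inf_ker_partialTrace hv]
    exact Submodule.finrank_mono (vectorSpan_le_hermitianAnnihilator_inf_ker hF.1 hFv)
  · obtain ⟨p₀⟩ : Nonempty (m × k) := inferInstance
    obtain ⟨A, hA, hker⟩ := exists_mem_kernelFace_ker_le_span_single p₀
    refine ⟨_, isFace_kernelFace (Pi.single p₀ 1), ⟨A, hA⟩, kernelFace_single_ne_channelSet p₀, ?_⟩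
    rw [faceDim, vectorSpan_kernelFace hA hker,
      finrank_hermitianAnnihilator_inf_ker_partialTrace (Pi.single_ne_zero_iff.2 one_ne_zero)]

lemma sq_sub_one_sq_sub_sq {n : ℕ} (hn : 2 ≤ n) :
    (n * n - 1) ^ 2 - n ^ 2 = n ^ 4 - 3 * n ^ 2 + 1 := by
  have hsq : 4 ≤ n ^ 2 := Nat.pow_le_pow_left hn 2
  have hn1 : n + 1 ≤ n * n := by nlinarith
  have hle : n ^ 2 ≤ (n * n - 1) ^ 2 := Nat.pow_le_pow_left (by lia) 2
  have hle' : 3 * n ^ 2 ≤ n ^ 4 := by nlinarith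
  zify [hle, hle', (by lia : 1 ≤ n * n)]
  ring

/-- The maximum dimension of a proper face of `C_n` is `n⁴ - 3n² + 1`. -/
theorem max_dim_proper_face (n : ℕ) (hn : 2 ≤ n) :
    (∀ F : Set (Matrix (Fin n × Fin n) (Fin n × Fin n) ℂ),
        IsFace (Cset n) F → F.Nonempty → F ≠ Cset n →
        faceDim F ≤ n ^ 4 - 3 * n ^ 2 + 1) ∧
    ∃ F : Set (Matrix (Fin n × Fin n) (Fin n × Fin n) ℂ),
        IsFace (Cset n) F ∧ F.Nonempty ∧ F ≠ Cset n ∧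
        faceDim F = n ^ 4 - 3 * n ^ 2 + 1 := by
  have : Nontrivial (Fin n) := Fin.nontrivial_iff_two_le.2 hn
  rw [Cset_eq_channelSet, ← sq_sub_one_sq_sub_sq hn]
  simpa only [Fintype.card_fin] using max_dim_proper_face_general (Fin n) (Fin n)
end
end

section
/- Let n ≥ 3 be an integer and let A ∈ C_n with rank A = 2. Then the dimension of the face F(A) of C_n generated by A is 0, 1, or 2. -/
open Matrix
open scoped ComplexOrder

noncomputable section

/-!
Let `r` be the rank of `A`. Every member of the face generated by `A` kills `ker A`, so it has the
form `X H Xᴴ` for a fixed `X` with `r` independent columns, and differences of members come from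
the kernel of the complex linear map `H ↦ blockTrace (X H Xᴴ)` on `r × r` matrices. The face spans
a real space of Hermitian matrices, so its dimension is at most the complex dimension of that
kernel, which is `r ^ 2` minus the rank of the map. If `2 ≤ r`, this rank is at least `2`: the image
contains `1`, and it contains all `Vₖ Vₗᴴ`, where the `Vₖ` are the columns of `X` reshaped as square
matrices. If all of these were scalar, then every `Vₖ` would be a multiple of a single unitary,
contradicting the independence of the columns.
-/

section LinearAlgebra

theorem two_le_finrank_of_notMem_span_singleton {K E : Type*} [DivisionRing K] [AddCommGroup E]
    [Module K E] {S : Submodule K E} [FiniteDimensional K S] {x y : E} (hx : x ∈ S) (hy : y ∈ S)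
    (hx0 : x ≠ 0) (hyx : y ∉ Submodule.span K {x}) : 2 ≤ Module.finrank K S := by
  have hli : LinearIndependent K ![(⟨x, hx⟩ : S), ⟨y, hy⟩] := by
    refine (LinearIndependent.pair_iff' fun h ↦ hx0 (congrArg Subtype.val h)).2 fun a ha ↦ hyx ?_
    exact Submodule.mem_span_singleton.2 ⟨a, congrArg Subtype.val ha⟩
  simpa using hli.fintype_card_le_finrank

-- The map `(s, t) ↦ s + i t` embeds `S × S` into `K`, and `K` has real dimension `2 dim_ℂ K`.
open Complex ComplexStarModule in
theorem finrank_real_le_finrank_complex_of_le_selfAdjoint {E : Type*} [AddCommGroup E]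
    [Module ℂ E] [StarAddMonoid E] [StarModule ℂ E] {S : Submodule ℝ E} {K : Submodule ℂ E}
    [FiniteDimensional ℂ K] (hself : S ≤ selfAdjoint.submodule ℝ E)
    (hSK : S ≤ K.restrictScalars ℝ) : Module.finrank ℝ S ≤ Module.finrank ℂ K := by
  have : FiniteDimensional ℝ K := FiniteDimensional.complexToReal K
  let incl : S →ₗ[ℝ] K := Submodule.inclusion hSK
  have : FiniteDimensional ℝ S :=
    Module.Finite.of_injective incl (Submodule.inclusion_injective hSK)
  let combine : S × S →ₗ[ℝ] K := incl.coprod (I • incl)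
  have combine_injective : Function.Injective combine := by
    rw [injective_iff_map_eq_zero]
    rintro ⟨s, t⟩ hst
    have hs : IsSelfAdjoint (s : E) := hself s.2
    have ht : IsSelfAdjoint (t : E) := hself t.2
    have hzero : (s : E) + I • (t : E) = 0 := congrArg Subtype.val hst
    have hs0 : (s : E) = 0 := by
      simpa [hs.coe_realPart, ht.imaginaryPart] using congrArg (fun x ↦ (ℜ x : E)) hzero
    have ht0 : (t : E) = 0 := by
      simpa [ht.coe_realPart, hs.imaginaryPart] using congrArg (fun x ↦ (ℑ x : E)) hzero
    exact Prod.ext (Subtype.ext hs0) (Subtype.ext ht0)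
  have hdim := LinearMap.finrank_le_finrank_of_injective combine_injective
  rw [Module.finrank_prod, finrank_real_of_complex] at hdim
  omega

end LinearAlgebra

section Matrix

variable {m p : Type*} [Fintype m]

theorem exists_mul_eq_one_and_mul_mul_eq_self [Fintype p] {K : Type*} [Field K]
    (A : Matrix m p K) :
    ∃ (X : Matrix m (Fin A.rank) K) (Y : Matrix (Fin A.rank) m K), Y * X = 1 ∧ X * Y * A = A := by
  classical
  let e : LinearMap.range A.mulVecLin ≃ₗ[K] (Fin A.rank → K) :=
    LinearEquiv.ofFinrankEq _ _ (Module.finrank_fin_fun K).symm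
  let f : (Fin A.rank → K) →ₗ[K] (m → K) :=
    (LinearMap.range A.mulVecLin).subtype ∘ₗ e.symm.toLinearMap
  have hf : LinearMap.ker f = ⊥ :=
    LinearMap.ker_eq_bot.2 (Subtype.val_injective.comp e.symm.injective)
  obtain ⟨g, hgf⟩ := f.exists_leftInverse_of_injective hf
  refine ⟨f.toMatrix', g.toMatrix', ?_, Matrix.ext_of_mulVec_single fun j ↦ ?_⟩
  · rw [← LinearMap.toMatrix'_comp, hgf, LinearMap.toMatrix'_id]
  · obtain ⟨z, hz⟩ : ∃ z, f z = A *ᵥ Pi.single j 1 :=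
      ⟨e ⟨A.mulVecLin (Pi.single j 1), LinearMap.mem_range_self _ _⟩, by simp [f]⟩
    have hgfz : g (f z) = z := LinearMap.congr_fun hgf z
    rw [← mulVec_mulVec, ← mulVec_mulVec, ← hz, LinearMap.toMatrix'_mulVec,
      LinearMap.toMatrix'_mulVec, hgfz]

theorem linearIndependent_col_of_mul_eq_one [Finite p] [DecidableEq p] {R : Type*}
    [CommRing R] {X : Matrix m p R} {Y : Matrix p m R} (hYX : Y * X = 1) :
    LinearIndependent R X.col := by
  cases nonempty_fintype p
  refine mulVec_injective_iff.1 (Function.LeftInverse.injective (g := Y.mulVec) fun v ↦ ?_)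
  rw [mulVec_mulVec, hYX, one_mulVec]

theorem mul_eq_zero_of_ker_mulVecLin_le {l o q R : Type*} [CommRing R] {A : Matrix l m R}
    {B : Matrix o m R} (hker : LinearMap.ker A.mulVecLin ≤ LinearMap.ker B.mulVecLin)
    {Q : Matrix m q R} (hAQ : A * Q = 0) : B * Q = 0 := by
  ext i j
  have hcol : Q.col j ∈ LinearMap.ker A.mulVecLin := funext fun i ↦ congrFun₂ hAQ i j
  exact congrFun (hker hcol) i

variable {𝕜 : Type*} [RCLike 𝕜]

theorem mulVec_eq_zero_of_posSemidef_smul_add {A B : Matrix m m 𝕜} (hA : A.PosSemidef)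
    (hB : B.PosSemidef) {t : ℝ} (ht : 0 < t) {v : m → 𝕜} (h : (t • A + B) *ᵥ v = 0) :
    A *ᵥ v = 0 := by
  have htA : (t • A).PosSemidef := hA.smul ht.le
  have hsum : star v ⬝ᵥ (t • A) *ᵥ v + star v ⬝ᵥ B *ᵥ v = 0 := by
    rw [← dotProduct_add, ← add_mulVec, h, dotProduct_zero]
  have hquad : star v ⬝ᵥ (t • A) *ᵥ v = 0 :=
    ((add_eq_zero_iff_of_nonneg (htA.dotProduct_mulVec_nonneg v)
      (hB.dotProduct_mulVec_nonneg v)).1 hsum).1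
  have htAv : t • (A *ᵥ v) = 0 := by
    rw [← smul_mulVec]
    exact (htA.dotProduct_mulVec_zero_iff v).1 hquad
  exact (smul_eq_zero.1 htAv).resolve_left ht.ne'

theorem exists_mul_conjTranspose_notMem_span_one [DecidableEq m] {ι : Type*} [Nontrivial ι]
    {V : ι → Matrix m m 𝕜} (hV : LinearIndependent 𝕜 V) :
    ∃ k l, V k * (V l)ᴴ ∉ Submodule.span 𝕜 {(1 : Matrix m m 𝕜)} := by
  by_contra! hscalar
  simp only [Submodule.mem_span_singleton] at hscalar
  obtain ⟨k, l, hkl⟩ := exists_pair_ne ι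
  obtain ⟨c, hc⟩ := hscalar k k
  obtain ⟨z, hz⟩ := hscalar l k
  have hc0 : c ≠ 0 := by
    rintro rfl
    rw [zero_smul, eq_comm, self_mul_conjTranspose_eq_zero] at hc
    exact hV.ne_zero k hc
  have hleft : (c⁻¹ • (V k)ᴴ) * V k = 1 := by
    rw [mul_eq_one_comm, Matrix.mul_smul, ← hc, smul_smul, inv_mul_cancel₀ hc0, one_smul]
  have hmultiple : (c⁻¹ * z) • V k = V l := by
    calc (c⁻¹ * z) • V k = c⁻¹ • (V l * (V k)ᴴ * V k) := by
          rw [← hz, Matrix.smul_mul, Matrix.one_mul, smul_smul]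
      _ = V l * ((c⁻¹ • (V k)ᴴ) * V k) := by
          rw [Matrix.smul_mul, Matrix.mul_smul, Matrix.mul_assoc]
      _ = V l := by rw [hleft, Matrix.mul_one]
  have hnotMem : V l ∉ Submodule.span 𝕜 {V k} := by
    simpa using hV.notMem_span_image (s := {k}) (Ne.symm hkl)
  exact hnotMem (Submodule.mem_span_singleton.2 ⟨_, hmultiple⟩)

end Matrix

section Congruence

variable {m p 𝕜 : Type*} [Fintype p] [RCLike 𝕜]

/-- The congruence `H ↦ X H Xᴴ` as a linear map. Its range consists of the matrices `B` such
that the column spaces of `B` and `Bᴴ` lie in that of `X`. -/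
def congruence (X : Matrix m p 𝕜) : Matrix p p 𝕜 →ₗ[𝕜] Matrix m m 𝕜 where
  toFun H := X * H * Xᴴ
  map_add' H H' := by rw [Matrix.mul_add, Matrix.add_mul]
  map_smul' c H := by rw [Matrix.mul_smul, Matrix.smul_mul, RingHom.id_apply]

theorem congruence_apply (X : Matrix m p 𝕜) (H : Matrix p p 𝕜) : congruence X H = X * H * Xᴴ :=
  rfl

theorem mem_range_congruence_of_ker_le [Fintype m] {A B : Matrix m m 𝕜}
    {X : Matrix m p 𝕜} {Y : Matrix p m 𝕜} (hA : A.IsHermitian) (hB : B.IsHermitian)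
    (hXY : X * Y * A = A) (hker : LinearMap.ker A.mulVecLin ≤ LinearMap.ker B.mulVecLin) :
    B ∈ LinearMap.range (congruence X) := by
  classical
  have hA_right : A * (Yᴴ * Xᴴ) = A := by
    simpa only [conjTranspose_mul, hA.eq] using congrArg conjTranspose hXY
  have hB_right : B * (Yᴴ * Xᴴ) = B := by
    have hzero : B * (1 - Yᴴ * Xᴴ) = 0 := mul_eq_zero_of_ker_mulVecLin_le hker <| by
      rw [Matrix.mul_sub, Matrix.mul_one, hA_right, sub_self]
    rwa [Matrix.mul_sub, Matrix.mul_one, sub_eq_zero, eq_comm] at hzero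
  have hB_left : X * Y * B = B := by
    simpa only [conjTranspose_mul, conjTranspose_conjTranspose, hB.eq] using
      congrArg conjTranspose hB_right
  refine ⟨Y * B * Yᴴ, ?_⟩
  calc X * (Y * B * Yᴴ) * Xᴴ = X * Y * B * (Yᴴ * Xᴴ) := by simp only [Matrix.mul_assoc]
    _ = B := by rw [hB_left, hB_right]

end Congruence

section BlockTrace

variable {ι κ p : Type*}

/-- Column `k` of `X` reshaped as a matrix. If `X * Xᴴ` is the Choi matrix of a channel, these are
the transposes of its Kraus operators. -/
def krausOperator {R : Type*} (X : Matrix (ι × κ) p R) (k : p) : Matrix ι κ R :=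
  Matrix.of fun i a ↦ X (i, a) k

theorem linearIndependent_krausOperator {R : Type*} [CommRing R] {X : Matrix (ι × κ) p R}
    (hX : LinearIndependent R X.col) : LinearIndependent R (krausOperator X) :=
  hX.map' ((LinearEquiv.curry R R ι κ).trans (Matrix.ofLinearEquiv R)).toLinearMap
    (LinearEquiv.ker _)

variable [Fintype κ]

/-- The matrix of traces of the blocks of a block matrix (the partial trace over the inner
index), so that `Cset n` is cut out of the positive semidefinite cone by `blockTrace A = 1`. -/
def blockTrace {R : Type*} [CommSemiring R] :
    Matrix (ι × κ) (ι × κ) R →ₗ[R] Matrix ι ι R where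
  toFun A := Matrix.of fun i j ↦ ∑ k, A (i, k) (j, k)
  map_add' A B := by ext i j; simp [Finset.sum_add_distrib]
  map_smul' c A := by ext i j; simp [Finset.mul_sum]

variable [Fintype p] {𝕜 : Type*} [RCLike 𝕜]

theorem blockTrace_congruence_single [DecidableEq p] (X : Matrix (ι × κ) p 𝕜) (k l : p) :
    blockTrace (congruence X (Matrix.single k l 1)) =
      krausOperator X k * (krausOperator X l)ᴴ := by
  ext i j
  simp [blockTrace, congruence_apply, krausOperator, Matrix.mul_apply, Matrix.single_apply, ite_and]

theorem two_le_finrank_range_blockTrace_comp_congruence [Fintype ι] [DecidableEq ι] [Nontrivial p]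
    {X : Matrix (ι × ι) p 𝕜} (hX : LinearIndependent 𝕜 X.col)
    (hone : 1 ∈ LinearMap.range (blockTrace ∘ₗ congruence X)) :
    2 ≤ Module.finrank 𝕜 (LinearMap.range (blockTrace ∘ₗ congruence X)) := by
  classical
  obtain ⟨k, l, hkl⟩ :=
    exists_mul_conjTranspose_notMem_span_one (linearIndependent_krausOperator hX)
  have : Nontrivial (Matrix ι ι 𝕜) :=
    nontrivial_of_ne _ 0 (ne_of_mem_of_not_mem (zero_mem _) hkl).symm
  exact two_le_finrank_of_notMem_span_singleton hone
    ⟨Matrix.single k l 1, blockTrace_congruence_single X k l⟩ one_ne_zero hkl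

end BlockTrace

section Face

variable {n : ℕ}

theorem faceGen_subset {V : Type*} [AddCommGroup V] [Module ℝ V] {C F : Set V} {A : V}
    (hF : IsFace C F) (hA : A ∈ F) : faceGen C A ⊆ F :=
  Set.sInter_subset_of_mem ⟨hF, hA⟩

theorem mem_Cset_iff {A : Matrix (Fin n × Fin n) (Fin n × Fin n) ℂ} :
    A ∈ Cset n ↔ A.PosSemidef ∧ blockTrace A = 1 := by
  simp [Cset, blockTrace, ← Matrix.ext_iff, Matrix.one_apply]

theorem convex_Cset (n : ℕ) : Convex ℝ (Cset n) := by
  intro A hA B hB a b ha hb hab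
  rw [mem_Cset_iff] at hA hB ⊢
  refine ⟨(hA.1.smul ha).add (hB.1.smul hb), ?_⟩
  rw [map_add, LinearMap.map_smul_of_tower, LinearMap.map_smul_of_tower, hA.2, hB.2, ← add_smul,
    hab, one_smul]

theorem isFace_Cset_ker_le (W : Submodule ℂ (Fin n × Fin n → ℂ)) :
    IsFace (Cset n) {B ∈ Cset n | W ≤ LinearMap.ker B.mulVecLin} := by
  refine ⟨Set.sep_subset _ _, ?_, ?_⟩
  · rintro A ⟨hA, hWA⟩ B ⟨hB, hWB⟩ a b ha hb hab
    refine ⟨convex_Cset n hA hB ha hb hab, fun v hv ↦ ?_⟩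
    have hAv : A *ᵥ v = 0 := hWA hv
    have hBv : B *ᵥ v = 0 := hWB hv
    simp [hAv, hBv]
  · rintro A hA B hB t ht0 ht1 ⟨-, hW⟩
    have hs0 : 0 < 1 - t := sub_pos.2 ht1
    refine ⟨⟨hA, fun v hv ↦ ?_⟩, ⟨hB, fun v hv ↦ ?_⟩⟩
    · exact mulVec_eq_zero_of_posSemidef_smul_add hA.1 (hB.1.smul hs0.le) ht0 (hW hv)
    · rw [add_comm] at hW
      exact mulVec_eq_zero_of_posSemidef_smul_add hB.1 (hA.1.smul ht0.le) hs0 (hW hv)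

variable {A : Matrix (Fin n × Fin n) (Fin n × Fin n) ℂ}

theorem faceGen_Cset_subset_ker_le (hA : A ∈ Cset n) :
    faceGen (Cset n) A ⊆
      {B ∈ Cset n | LinearMap.ker A.mulVecLin ≤ LinearMap.ker B.mulVecLin} :=
  faceGen_subset (isFace_Cset_ker_le _) ⟨hA, le_rfl⟩

theorem vectorSpan_faceGen_Cset_le_selfAdjoint (hA : A ∈ Cset n) :
    vectorSpan ℝ (faceGen (Cset n) A) ≤ selfAdjoint.submodule ℝ _ := by
  rw [vectorSpan_def, Submodule.span_le]
  rintro _ ⟨B, hB, B', hB', rfl⟩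
  exact (faceGen_Cset_subset_ker_le hA hB).1.1.1.sub (faceGen_Cset_subset_ker_le hA hB').1.1.1

theorem vectorSpan_faceGen_Cset_le_map_ker {p : Type*} [Fintype p]
    {X : Matrix (Fin n × Fin n) p ℂ} {Y : Matrix p (Fin n × Fin n) ℂ} (hA : A ∈ Cset n)
    (hXY : X * Y * A = A) :
    vectorSpan ℝ (faceGen (Cset n) A) ≤
      ((LinearMap.ker (blockTrace ∘ₗ congruence X)).map (congruence X)).restrictScalars ℝ := by
  have hrep {B} (hB : B ∈ faceGen (Cset n) A) :
      ∃ H, congruence X H = B ∧ blockTrace (congruence X H) = 1 := by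
    obtain ⟨hBC, hker⟩ := faceGen_Cset_subset_ker_le hA hB
    obtain ⟨H, rfl⟩ := mem_range_congruence_of_ker_le hA.1.1 hBC.1.1 hXY hker
    exact ⟨H, rfl, (mem_Cset_iff.1 hBC).2⟩
  rw [vectorSpan_def, Submodule.span_le]
  rintro _ ⟨B, hB, B', hB', rfl⟩
  obtain ⟨H, rfl, hH⟩ := hrep hB
  obtain ⟨H', rfl, hH'⟩ := hrep hB'
  refine ⟨H - H', ?_, map_sub _ _ _⟩
  rw [SetLike.mem_coe, LinearMap.mem_ker, map_sub, LinearMap.comp_apply, LinearMap.comp_apply,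
    hH, hH', sub_self]

end Face

theorem faceDim_rank_two_n_ge_three_general (n : ℕ)
    (A : Matrix (Fin n × Fin n) (Fin n × Fin n) ℂ) (hA : A ∈ Cset n) (hrank : 2 ≤ A.rank) :
    faceDim (faceGen (Cset n) A) + 2 ≤ A.rank ^ 2 := by
  obtain ⟨X, Y, hYX, hXY⟩ := exists_mul_eq_one_and_mul_mul_eq_self A
  have : Nontrivial (Fin A.rank) := Fin.nontrivial_iff_two_le.2 hrank
  let L := blockTrace ∘ₗ congruence X
  have hone : 1 ∈ LinearMap.range L := by
    obtain ⟨H, hH⟩ := mem_range_congruence_of_ker_le hA.1.1 hA.1.1 hXY le_rfl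
    exact ⟨H, (congrArg blockTrace hH).trans (mem_Cset_iff.1 hA).2⟩
  calc faceDim (faceGen (Cset n) A) + 2
      ≤ Module.finrank ℂ ((LinearMap.ker L).map (congruence X)) + 2 := by
        gcongr
        exact finrank_real_le_finrank_complex_of_le_selfAdjoint
          (vectorSpan_faceGen_Cset_le_selfAdjoint hA) (vectorSpan_faceGen_Cset_le_map_ker hA hXY)
    _ ≤ Module.finrank ℂ (LinearMap.ker L) + Module.finrank ℂ (LinearMap.range L) := by
        gcongr
        · exact Submodule.finrank_map_le _ _
        · exact two_le_finrank_range_blockTrace_comp_congruence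
            (linearIndependent_col_of_mul_eq_one hYX) hone
    _ = A.rank ^ 2 := by
        rw [add_comm, LinearMap.finrank_range_add_finrank_ker, Module.finrank_matrix]
        simp [sq]

/-- If `n ≥ 3` and `A ∈ C_n` has rank 2, then the face of `C_n` generated by `A`
has dimension 0, 1 or 2. -/
theorem faceDim_rank_two_n_ge_three (n : ℕ) (hn : 3 ≤ n)
    (A : Matrix (Fin n × Fin n) (Fin n × Fin n) ℂ)
    (hA : A ∈ Cset n) (hrank : A.rank = 2) :
    faceDim (faceGen (Cset n) A) = 0 ∨ faceDim (faceGen (Cset n) A) = 1 ∨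
      faceDim (faceGen (Cset n) A) = 2 := by
  have hdim := faceDim_rank_two_n_ge_three_general n A hA hrank.ge
  rw [hrank] at hdim
  omega
end
end

section
/- Let n be a positive integer and let x ∈ ℂ^{n²} be nonzero. Then there exists a vector u = (u_1ᵗ, u_2ᵗ, …, u_nᵗ)ᵗ ∈ ℂ^{n²}, with u_i ∈ ℂⁿ for each i, such that the vectors u_1, …, u_n form an orthonormal basis of ℂⁿ with respect to the standard inner product and the standard inner product ⟨u, x⟩ in ℂ^{n²} is nonzero. -/
open Matrix
open scoped ComplexOrder

noncomputable section

/-!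
Read `x` as a matrix `X` and `u` as a unitary matrix `U`, so that `⟨u, x⟩ = tr (Uᴴ X)`.  If
`X a b ≠ 0`, multiplying by the permutation matrix of the transposition `(a b)` moves this entry to
the diagonal.  For a matrix `Y` with `Y a a ≠ 0`, take `U = 1` if `tr Y ≠ 0`; otherwise take the
reflection `2 Eₐₐ - 1`, for which the trace is `2 Y a a - tr Y = 2 Y a a`.
-/

section Semiring

variable {ι R : Type*} [Fintype ι] [DecidableEq ι] [Semiring R] [StarRing R]

theorem isStarProjection_single_self (a : ι) :
    IsStarProjection (single a a 1 : Matrix ι ι R) where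
  isIdempotentElem := by simp [IsIdempotentElem]
  isSelfAdjoint := by simp [isSelfAdjoint_iff, star_eq_conjTranspose]

theorem permMatrix_mem_unitary (σ : Equiv.Perm ι) :
    σ.permMatrix R ∈ unitary (Matrix ι ι R) := by
  simp [Unitary.mem_iff, star_eq_conjTranspose, ← permMatrix_mul]

end Semiring

theorem span_range_row_eq_top_of_mul_eq_one {m n R : Type*} [Fintype m] [Finite n]
    [DecidableEq n] [Semiring R] {A : Matrix m n R} {B : Matrix n m R} (hBA : B * A = 1) :
    Submodule.span R (Set.range A.row) = ⊤ := by
  have := Fintype.ofFinite n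
  rw [← range_vecMulLinear, LinearMap.range_eq_top]
  exact fun v => ⟨v ᵥ* B, by simp [hBA]⟩

theorem trace_conjTranspose_mul_eq_sum {m n R : Type*} [Fintype m] [Fintype n]
    [NonUnitalNonAssocSemiring R] [Star R] (A B : Matrix m n R) :
    (Aᴴ * B).trace = ∑ p : m × n, star (A p.1 p.2) * B p.1 p.2 := by
  simp only [trace, diag_apply, mul_apply, conjTranspose_apply, Fintype.sum_prod_type_right]

theorem exists_mem_unitary_trace_conjTranspose_mul_ne_zero_of_diag_ne_zero {ι R : Type*}
    [Fintype ι] [DecidableEq ι] [Ring R] [StarRing R] (h2 : IsLeftRegular (2 : R))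
    {Y : Matrix ι ι R} {a : ι} (ha : Y a a ≠ 0) :
    ∃ U ∈ unitary (Matrix ι ι R), (Uᴴ * Y).trace ≠ 0 := by
  by_cases htr : Y.trace = 0
  · have hE : IsStarProjection (single a a 1 : Matrix ι ι R) := isStarProjection_single_self a
    refine ⟨2 * single a a 1 - 1, hE.two_mul_sub_one_mem_unitary, ?_⟩
    have htrace : ((2 * single a a 1 - 1 : Matrix ι ι R)ᴴ * Y).trace = 2 * Y a a := by
      simp [two_mul, sub_mul, add_mul, trace_single_mul, htr]
    rw [htrace]
    exact fun h => ha (h2 (h.trans (mul_zero 2).symm))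
  · exact ⟨1, one_mem _, by simpa using htr⟩

section CommRing

variable {ι R : Type*} [Fintype ι] [DecidableEq ι] [CommRing R] [StarRing R]

theorem exists_mem_unitaryGroup_trace_conjTranspose_mul_ne_zero (h2 : IsLeftRegular (2 : R))
    {X : Matrix ι ι R} (hX : X ≠ 0) :
    ∃ U ∈ unitaryGroup ι R, (Uᴴ * X).trace ≠ 0 := by
  obtain ⟨a, b, hab⟩ : ∃ a b, X a b ≠ 0 := by
    by_contra! h
    exact hX (Matrix.ext h)
  let P : Matrix ι ι R := (Equiv.swap a b).permMatrix R
  have hdiag : (X * Pᴴ) a a ≠ 0 := by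
    simpa [P, Equiv.Perm.permMatrix, PEquiv.mul_toMatrix_toPEquiv] using hab
  obtain ⟨U, hU, htr⟩ := exists_mem_unitary_trace_conjTranspose_mul_ne_zero_of_diag_ne_zero h2 hdiag
  refine ⟨U * P, mul_mem hU (permMatrix_mem_unitary _), ?_⟩
  rwa [conjTranspose_mul, Matrix.mul_assoc, trace_mul_comm, Matrix.mul_assoc]

theorem sum_star_mul_eq_ite_of_mem_unitaryGroup {U : Matrix ι ι R} (hU : U ∈ unitaryGroup ι R)
    (i j : ι) : ∑ k, star (U i k) * U j k = if i = j then 1 else 0 := by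
  have hji : (U * star U) j i = (1 : Matrix ι ι R) j i := by rw [mem_unitaryGroup_iff.mp hU]
  simpa [mul_apply, one_apply, mul_comm, eq_comm] using hji

theorem exists_orthonormal_blocks_inner_ne_zero_general (h2 : IsLeftRegular (2 : R))
    (x : ι × ι → R) (hx : x ≠ 0) :
    ∃ u : ι × ι → R,
      (∀ i j : ι, ∑ k : ι, star (u (i, k)) * u (j, k) = if i = j then 1 else 0) ∧
      Submodule.span R (Set.range fun i : ι => fun k : ι => u (i, k)) = ⊤ ∧
      ∑ p : ι × ι, star (u p) * x p ≠ 0 := by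
  let X : Matrix ι ι R := of fun i k => x (i, k)
  have hX : X ≠ 0 := fun h => hx (funext fun p => congr_fun₂ h p.1 p.2)
  obtain ⟨U, hU, htr⟩ := exists_mem_unitaryGroup_trace_conjTranspose_mul_ne_zero h2 hX
  rw [trace_conjTranspose_mul_eq_sum] at htr
  exact ⟨fun p => U p.1 p.2, sum_star_mul_eq_ite_of_mem_unitaryGroup hU,
    span_range_row_eq_top_of_mul_eq_one (mem_unitaryGroup_iff'.mp hU), htr⟩

end CommRing

/-- For every nonzero `x ∈ ℂ^{n²}` there is a vector `u` whose `n` blocks form an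
orthonormal basis of `ℂⁿ` and with `⟨u, x⟩ ≠ 0`. -/
theorem exists_orthonormal_blocks_inner_ne_zero (n : ℕ) (hn : 0 < n)
    (x : Fin n × Fin n → ℂ) (hx : x ≠ 0) :
    ∃ u : Fin n × Fin n → ℂ,
      (∀ i j : Fin n,
          ∑ k : Fin n, star (u (i, k)) * u (j, k) = if i = j then 1 else 0) ∧
      Submodule.span ℂ (Set.range fun i : Fin n => fun k : Fin n => u (i, k)) = ⊤ ∧
      ∑ p : Fin n × Fin n, star (u p) * x p ≠ 0 := by
  exact exists_orthonormal_blocks_inner_ne_zero_general (IsRegular.of_ne_zero two_ne_zero).left x hx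
end
end
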